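/- Let T, the constants, and a gadget system satisfying (G1)–(G9) be as in the context, and let A₃ ⊆ A₁ with a partition {B₁, …, B_{σ₃t}} of A₃ satisfy: |B_i| = 10k for every i ∈ [σ₃t]; for every i ∈ [σ₃t], α ∈ B_i and u ∈ S(α), the vertex u has at least τ₃kt out-neighbours and at least τ₃kt in-neighbours that are eligible for B_i in W(A₃ ∖ B_i) ∖ X(α); and for every i ∈ [σ₃t] there are at least n/10 vertices in V_good ∩ W(A₃) that are eligible for B_i in W(A₃). Then there exist pairwise disjoint vertex sets V₁, …, V_t such that: (i) 2k ≤ |V_i| ≤ n/t for every i ∈ [t]; (ii) T[V_i] is strongly k-connected for every i ∈ [t]; (iii) each V_i contains at least 10k of the sets U(α) with α ∈ A₃; (iv) setting Z := V ∖ (V₁ ∪ … ∪ V_t), for every i ∈ [t] there are at least n/100 vertices in Z ∩ V_good that have at least k out-neighbours and at least k in-neighbours in V_i. -/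

import Mathlib

open Finset

namespace TournamentPartition

/-! ### Basic constants from the paper -/

def rho : ℕ := 10 ^ 4
def sigma1 : ℕ := 10 ^ 60
def sigma2 : ℕ := 10 ^ 4
def sigma3 : ℕ := 10

/-- `s` contains at least `m` elements satisfying `P`. -/
def ManyIn {α : Type*} (s : Finset α) (m : ℝ) (P : α → Prop) : Prop :=
  ∃ s' : Finset α, s' ⊆ s ∧ m ≤ (s'.card : ℝ) ∧ ∀ x ∈ s', P x

section Defs

variable {V I : Type*}

/-- `E u v` means that the edge between `u` and `v` is directed from `u` to `v`. -/
def IsTournament (E : V → V → Prop) : Prop :=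
  (∀ v, ¬ E v v) ∧ ∀ u v : V, u ≠ v → (E u v ↔ ¬ E v u)

/-- There is a directed path from `u` to `v` all of whose vertices lie in `S`. -/
def ReachWithin (E : V → V → Prop) (S : Set V) (u v : V) : Prop :=
  Relation.ReflTransGen (fun a b => a ∈ S ∧ b ∈ S ∧ E a b) u v

def StronglyConnectedOn (E : V → V → Prop) (S : Set V) : Prop :=
  ∀ u ∈ S, ∀ v ∈ S, ReachWithin E S u v

/-- A directed path, as a list of distinct vertices with consecutive edges. -/
def IsDiPath (E : V → V → Prop) (l : List V) : Prop :=
  l ≠ [] ∧ l.Nodup ∧ l.Chain' E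

variable [Fintype V] [DecidableEq V]

/-- The set `S` induces a strongly `k`-connected subtournament. -/
def StronglyKConnectedOn (E : V → V → Prop) (k : ℕ) (S : Finset V) : Prop :=
  k + 1 ≤ S.card ∧
    ∀ Z : Finset V, Z.card ≤ k → StronglyConnectedOn E ((S \ Z : Finset V) : Set V)

def StronglyKConnected (E : V → V → Prop) (k : ℕ) : Prop :=
  StronglyKConnectedOn E k Finset.univ

def outN (E : V → V → Prop) [DecidableRel E] (u : V) : Finset V :=
  Finset.univ.filter fun v => E u v

def inN (E : V → V → Prop) [DecidableRel E] (u : V) : Finset V :=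
  Finset.univ.filter fun v => E v u

/-- A system of gadgets `U(α)` with special sets `S⁺(α), S⁻(α) ⊆ S(α) ⊆ U(α)`,
exceptional sets `X(α)` and special vertices `s⁺(α), s⁻(α) ∈ S(α)`. -/
structure GadgetSystem (V I : Type*) where
  U : I → Finset V
  S : I → Finset V
  Sp : I → Finset V
  Sm : I → Finset V
  X : I → Finset V
  sp : I → V
  sm : I → V
  sp_mem : ∀ α, sp α ∈ S α
  sm_mem : ∀ α, sm α ∈ S α
  Sp_subset : ∀ α, Sp α ⊆ S α
  Sm_subset : ∀ α, Sm α ⊆ S α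
  S_subset : ∀ α, S α ⊆ U α

variable [Fintype I] [DecidableEq I]

def Vokay (G : GadgetSystem V I) : Finset V :=
  Finset.univ \ Finset.univ.biUnion G.S

/-- Vertices of `V_okay` having no out-neighbour in `S⁻(α)` for at least `k*t` indices `α`. -/
def VbadP (E : V → V → Prop) [DecidableRel E] (G : GadgetSystem V I) (k t : ℕ) : Finset V :=
  (Vokay G).filter fun u =>
    k * t ≤ (Finset.univ.filter fun α : I => ∀ v ∈ G.Sm α, ¬ E u v).card

/-- Vertices of `V_okay` having no in-neighbour in `S⁺(α)` for at least `k*t` indices `α`. -/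
def VbadM (E : V → V → Prop) [DecidableRel E] (G : GadgetSystem V I) (k t : ℕ) : Finset V :=
  (Vokay G).filter fun u =>
    k * t ≤ (Finset.univ.filter fun α : I => ∀ v ∈ G.Sp α, ¬ E v u).card

def Vbad (E : V → V → Prop) [DecidableRel E] (G : GadgetSystem V I) (k t : ℕ) : Finset V :=
  VbadP E G k t ∩ VbadM E G k t

def VgoodP (E : V → V → Prop) [DecidableRel E] (G : GadgetSystem V I) (k t : ℕ) : Finset V :=
  Vokay G \ VbadP E G k t

def VgoodM (E : V → V → Prop) [DecidableRel E] (G : GadgetSystem V I) (k t : ℕ) : Finset V :=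
  Vokay G \ VbadM E G k t

def Vgood (E : V → V → Prop) [DecidableRel E] (G : GadgetSystem V I) (k t : ℕ) : Finset V :=
  VgoodP E G k t ∩ VgoodM E G k t

/-- `W(C) = V ∖ ⋃_{α ∈ C} U(α)`. -/
def Wof (G : GadgetSystem V I) (C : Finset I) : Finset V :=
  Finset.univ \ C.biUnion G.U

def NokayP (E : V → V → Prop) [DecidableRel E] (G : GadgetSystem V I) (u : V) : Finset V :=
  outN E u ∩ Vokay G

def NokayM (E : V → V → Prop) [DecidableRel E] (G : GadgetSystem V I) (u : V) : Finset V :=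
  inN E u ∩ Vokay G

def NgoodP (E : V → V → Prop) [DecidableRel E] (G : GadgetSystem V I) (k t : ℕ) (u : V) :
    Finset V :=
  outN E u ∩ VgoodP E G k t

def NgoodM (E : V → V → Prop) [DecidableRel E] (G : GadgetSystem V I) (k t : ℕ) (u : V) :
    Finset V :=
  inN E u ∩ Vgood E G k t

/-! ### Properties (G1)–(G9) -/

def CondG1 (G : GadgetSystem V I) : Prop :=
  ∀ α β : I, α ≠ β → Disjoint (G.U α) (G.U β)

def CondG2 (G : GadgetSystem V I) (k t : ℕ) : Prop :=
  ∀ α : I, (G.S α).card ≤ rho ∧ (G.X α).card ≤ rho * sigma1 * k * t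

def CondG3 (E : V → V → Prop) (G : GadgetSystem V I) : Prop :=
  ∀ α : I, ∀ u ∈ G.Sm α, ∀ v ∈ G.Sp α, ReachWithin E (G.U α : Set V) u v

def CondG4 (E : V → V → Prop) (G : GadgetSystem V I) : Prop :=
  ∀ α : I, ∀ x : V, x ∉ G.X α →
    (E x (G.sp α) → ∀ u ∈ G.U α \ G.S α, E x u) ∧
    (E (G.sm α) x → ∀ u ∈ G.U α \ G.S α, E u x)

def CondG5 (E : V → V → Prop) [DecidableRel E] (G : GadgetSystem V I) (k t : ℕ) : Prop :=
  ∀ u ∈ Vokay G,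
    10 ^ 12 * (VbadP E G k t).card ≤ (outN E u).card ∧
    10 ^ 12 * (VbadM E G k t).card ≤ (inN E u).card

/-- Properties (G1)–(G5) of a gadget system. -/
def GadgetHyp (E : V → V → Prop) [DecidableRel E] (G : GadgetSystem V I) (k t : ℕ) : Prop :=
  CondG1 G ∧ CondG2 G k t ∧ CondG3 E G ∧ CondG4 E G ∧ CondG5 E G k t

def CondG6 (E : V → V → Prop) [DecidableRel E] (G : GadgetSystem V I) (k t : ℕ) : Prop :=
  (Fintype.card V : ℝ) / 2 ≤ ((Vgood E G k t).card : ℝ)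

def CondG7 (E : V → V → Prop) [DecidableRel E] (G : GadgetSystem V I) (k t τ₁ : ℕ) : Prop :=
  ∀ u ∈ Vokay G,
    max ((10 : ℝ) ^ 11 * ((VbadP E G k t).card : ℝ)) (((τ₁ * k * t : ℕ) : ℝ) / 2)
      ≤ ((outN E u ∩ VgoodP E G k t).card : ℝ)

def CondG8 (E : V → V → Prop) [DecidableRel E] (G : GadgetSystem V I) (k t τ₁ : ℕ) : Prop :=
  ∀ u ∈ Vokay G,
    max ((10 : ℝ) ^ 11 * ((VbadM E G k t).card : ℝ)) (((τ₁ * k * t : ℕ) : ℝ) / 2)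
      ≤ ((inN E u ∩ Vgood E G k t).card : ℝ)

def CondG9 (E : V → V → Prop) [DecidableRel E] (G : GadgetSystem V I) (k t τ₁ : ℕ) : Prop :=
  ∀ u : V,
    max ((10 : ℝ) ^ 11 * (((Finset.univ \ Vokay G).card : ℕ) : ℝ)) (((τ₁ * k * t : ℕ) : ℝ) / 2)
      ≤ ((outN E u ∩ Vokay G).card : ℝ) ∧
    max ((10 : ℝ) ^ 11 * (((Finset.univ \ Vokay G).card : ℕ) : ℝ)) (((τ₁ * k * t : ℕ) : ℝ) / 2)
      ≤ ((inN E u ∩ Vokay G).card : ℝ)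

/-- Properties (G6)–(G9) of a gadget system. -/
def GadgetHyp2 (E : V → V → Prop) [DecidableRel E] (G : GadgetSystem V I) (k t τ₁ : ℕ) :
    Prop :=
  CondG6 E G k t ∧ CondG7 E G k t τ₁ ∧ CondG8 E G k t τ₁ ∧ CondG9 E G k t τ₁

/-! ### Available vertices -/

def AvailA1 (E : V → V → Prop) [DecidableRel E] (G : GadgetSystem V I) (k t : ℕ)
    (W : Finset V) (u : V) : Prop :=
  u ∈ Vgood E G k t ∩ W

def AvailA2 (E : V → V → Prop) [DecidableRel E] (G : GadgetSystem V I) (k t τ₂ : ℕ)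
    (W : Finset V) (u : V) : Prop :=
  u ∈ (VgoodP E G k t \ VgoodM E G k t) ∩ W ∧
    ManyIn (inN E u) ((τ₂ * k * t : ℕ) : ℝ) (AvailA1 E G k t W)

def AvailA3 (E : V → V → Prop) [DecidableRel E] (G : GadgetSystem V I) (k t τ₂ : ℕ)
    (W : Finset V) (u : V) : Prop :=
  u ∈ (VgoodM E G k t \ VgoodP E G k t) ∩ W ∧
    ManyIn (outN E u) ((τ₂ * k * t : ℕ) : ℝ)
      (fun v => AvailA1 E G k t W v ∨ AvailA2 E G k t τ₂ W v)

def AvailA4 (E : V → V → Prop) [DecidableRel E] (G : GadgetSystem V I) (k t τ₂ : ℕ)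
    (W : Finset V) (u : V) : Prop :=
  u ∈ Vbad E G k t ∩ W ∧
    ManyIn (outN E u) ((τ₂ * k * t : ℕ) : ℝ)
      (fun v => AvailA1 E G k t W v ∨ AvailA2 E G k t τ₂ W v) ∧
    ManyIn (inN E u) ((τ₂ * k * t : ℕ) : ℝ) (AvailA1 E G k t W)

/-- `u` is available (for `α`) with respect to a family `𝒜`, where `W = W(𝒜 ∖ {α})`. -/
def Available (E : V → V → Prop) [DecidableRel E] (G : GadgetSystem V I) (k t τ₂ : ℕ)
    (W : Finset V) (u : V) : Prop :=
  AvailA1 E G k t W u ∨ AvailA2 E G k t τ₂ W u ∨ AvailA3 E G k t τ₂ W u ∨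
    AvailA4 E G k t τ₂ W u

/-! ### Eligible and helpful vertices -/

/-- Indices `α ∈ 𝒜` such that `u` has no out-neighbour in `S⁻(α)`. -/
def MissOut (E : V → V → Prop) [DecidableRel E] (G : GadgetSystem V I) (𝒜 : Finset I)
    (u : V) : Finset I :=
  𝒜.filter fun α => ∀ v ∈ G.Sm α, ¬ E u v

/-- Indices `α ∈ 𝒜` such that `u` has no in-neighbour in `S⁺(α)`. -/
def MissIn (E : V → V → Prop) [DecidableRel E] (G : GadgetSystem V I) (𝒜 : Finset I)
    (u : V) : Finset I :=
  𝒜.filter fun α => ∀ v ∈ G.Sp α, ¬ E v u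

def Nice1 (E : V → V → Prop) [DecidableRel E] (G : GadgetSystem V I) (k t : ℕ)
    (𝒜 : Finset I) (W : Finset V) (u : V) : Prop :=
  u ∈ Vgood E G k t ∩ W ∧ (MissOut E G 𝒜 u).card ≤ k ∧ (MissIn E G 𝒜 u).card ≤ k

def Nice2 (E : V → V → Prop) [DecidableRel E] (G : GadgetSystem V I) (k t : ℕ) (m : ℝ)
    (𝒜 : Finset I) (W : Finset V) (u : V) : Prop :=
  u ∈ (VgoodP E G k t \ VgoodM E G k t) ∩ W ∧ (MissOut E G 𝒜 u).card ≤ k ∧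
    ManyIn (inN E u) m (Nice1 E G k t 𝒜 W)

def Nice3 (E : V → V → Prop) [DecidableRel E] (G : GadgetSystem V I) (k t : ℕ) (m : ℝ)
    (𝒜 : Finset I) (W : Finset V) (u : V) : Prop :=
  u ∈ (VgoodM E G k t \ VgoodP E G k t) ∩ W ∧ (MissIn E G 𝒜 u).card ≤ k ∧
    ManyIn (outN E u) m (fun v => Nice1 E G k t 𝒜 W v ∨ Nice2 E G k t m 𝒜 W v)

def Nice4 (E : V → V → Prop) [DecidableRel E] (G : GadgetSystem V I) (k t : ℕ) (m : ℝ)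
    (𝒜 : Finset I) (W : Finset V) (u : V) : Prop :=
  u ∈ Vbad E G k t ∩ W ∧
    ManyIn (inN E u) m (Nice1 E G k t 𝒜 W) ∧
    ManyIn (outN E u) m (fun v => Nice1 E G k t 𝒜 W v ∨ Nice2 E G k t m 𝒜 W v)

def NiceFor (E : V → V → Prop) [DecidableRel E] (G : GadgetSystem V I) (k t : ℕ) (m : ℝ)
    (𝒜 : Finset I) (W : Finset V) (u : V) : Prop :=
  Nice1 E G k t 𝒜 W u ∨ Nice2 E G k t m 𝒜 W u ∨ Nice3 E G k t m 𝒜 W u ∨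
    Nice4 E G k t m 𝒜 W u

/-- `u` is eligible for `𝒜` in `W`. -/
def Eligible (E : V → V → Prop) [DecidableRel E] (G : GadgetSystem V I) (k t τ₃ : ℕ)
    (𝒜 : Finset I) (W : Finset V) (u : V) : Prop :=
  NiceFor E G k t ((τ₃ * k * t : ℕ) : ℝ) 𝒜 W u

/-- `u` is helpful for `𝒜` in `W`. -/
def Helpful (E : V → V → Prop) [DecidableRel E] (G : GadgetSystem V I) (k t : ℕ)
    (𝒜 : Finset I) (W : Finset V) (u : V) : Prop :=
  NiceFor E G k t (k : ℝ) 𝒜 W u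

end Defs

noncomputable def phi0 (τ₁ : ℕ) : ℝ := (τ₁ : ℝ) / 4
noncomputable def phi1 (τ₁ : ℕ) : ℝ := phi0 τ₁ / (2 ^ 6 * (rho : ℝ))
noncomputable def phi2 (τ₁ : ℕ) : ℝ := phi1 τ₁ / (2 ^ 14 * (rho : ℝ) ^ 2)
noncomputable def phi3 (τ₁ : ℕ) : ℝ := phi2 τ₁ / (2 ^ 14 * (rho : ℝ) ^ 2)

/-!
Colour each vertex independently and uniformly with a pair `(i, a)`, where `i` is one of the `10 t`
groups of gadgets and `a` is one of 100 colours, and let `V_i` consist of the gadgets of group `i`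
together with the vertices of colour `(i, 0)` that are *settled*: more than `k` of the in- or
out-neighbours which their case (E2)–(E4) of eligibility promises received colour `(i, 0)` as well
(and, where needed, are settled themselves). By Chebyshev's and Markov's inequalities few groups
fail to give every vertex of every `S(α)` more than `k` settled in- and out-neighbours, so some
colouring has fewer than `t` such failures. Disjointness leaves at most `t` sets `V_i` with more
than `n / t` vertices, so `t` usable groups remain.

Let `Z` have at most `k` vertices. At most `k` of the `10 k` gadgets of group `i` meet `Z`, every
vertex of `V_i ∖ Z` reaches all but at most `k` of the others and is reached from all but at most
`k` of them, and (G3) joins these two kinds of paths inside a common gadget.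
-/

open MeasureTheory ProbabilityTheory

section Probability

open Classical in
lemma card_filter_mem_eq_sum_indicator {Ω ι : Type*} (s : Finset ι) (A : ι → Set Ω)
    (ω : Ω) : (#{i ∈ s | ω ∈ A i} : ℝ) = ∑ i ∈ s, (A i).indicator 1 ω := by
  simp only [natCast_card_filter, Set.indicator_apply, Pi.one_apply]

variable {Ω ι : Type*} [MeasurableSpace Ω] {μ : Measure Ω}

lemma memLp_indicator_one [IsFiniteMeasure μ] (p : ENNReal) {A : Set Ω} (hA : MeasurableSet A) :
    MemLp (A.indicator (1 : Ω → ℝ)) p μ :=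
  (memLp_const (1 : ℝ)).indicator hA

open Classical in
lemma memLp_card_filter_mem [IsFiniteMeasure μ] (p : ENNReal) (s : Finset ι) {A : ι → Set Ω}
    (hA : ∀ i, MeasurableSet (A i)) : MemLp (fun ω => (#{i ∈ s | ω ∈ A i} : ℝ)) p μ := by
  simp only [card_filter_mem_eq_sum_indicator]
  exact memLp_finsetSum _ fun i _ => memLp_indicator_one p (hA i)

open Classical in
lemma integral_card_filter_mem [IsFiniteMeasure μ] (s : Finset ι) {A : ι → Set Ω}
    (hA : ∀ i, MeasurableSet (A i)) :
    ∫ ω, (#{i ∈ s | ω ∈ A i} : ℝ) ∂μ = ∑ i ∈ s, μ.real (A i) := by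
  simp only [card_filter_mem_eq_sum_indicator]
  rw [integral_finsetSum _ fun i _ => (memLp_indicator_one 1 (hA i)).integrable le_rfl]
  exact sum_congr rfl fun i _ => integral_indicator_one (hA i)

open Classical in
lemma mul_measureReal_le_card_filter_mem_le [IsFiniteMeasure μ] (s : Finset ι) {A : ι → Set Ω}
    (hA : ∀ i, MeasurableSet (A i)) (a : ℝ) :
    a * μ.real {ω | a ≤ #{i ∈ s | ω ∈ A i}} ≤ ∑ i ∈ s, μ.real (A i) := by
  rw [← integral_card_filter_mem s hA]
  exact mul_meas_ge_le_integral_of_nonneg (ae_of_all _ fun _ => Nat.cast_nonneg _)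
    ((memLp_card_filter_mem 1 s hA).integrable le_rfl) a

open Classical in
lemma measureReal_mul_card_le_card_filter_mem_le [IsFiniteMeasure μ] {s : Finset ι}
    (hs : s.Nonempty) {A : ι → Set Ω} (hA : ∀ i, MeasurableSet (A i)) {a p : ℝ} (ha : 0 < a)
    (hp : ∀ i ∈ s, μ.real (A i) ≤ p) :
    μ.real {ω | a * #s ≤ #{i ∈ s | ω ∈ A i}} ≤ p / a := by
  have hs' : (0 : ℝ) < #s := by exact_mod_cast hs.card_pos
  have hmarkov := (mul_measureReal_le_card_filter_mem_le s hA (a * #s)).trans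
    (sum_le_card_nsmul s _ p hp)
  rw [nsmul_eq_mul] at hmarkov
  rw [le_div_iff₀ ha]
  refine le_of_mul_le_mul_left (le_of_eq_of_le ?_ hmarkov) hs'
  ring

lemma variance_indicator_one_le [IsProbabilityMeasure μ] {A : Set Ω} (hA : MeasurableSet A) :
    Var[A.indicator 1; μ] ≤ μ.real A := by
  have hsq : A.indicator (1 : Ω → ℝ) ^ 2 = A.indicator 1 := by
    ext ω
    by_cases h : ω ∈ A <;> simp [h]
  calc Var[A.indicator 1; μ] ≤ ∫ ω, (A.indicator (1 : Ω → ℝ) ^ 2) ω ∂μ :=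
        variance_le_expectation_sq (memLp_indicator_one 2 hA).aestronglyMeasurable
    _ = μ.real A := by rw [hsq, integral_indicator_one hA]

open Classical in
lemma variance_card_filter_mem_le [IsProbabilityMeasure μ] (s : Finset ι) {A : ι → Set Ω}
    (hA : ∀ i, MeasurableSet (A i)) (hind : iIndepSet A μ) :
    Var[fun ω => (#{i ∈ s | ω ∈ A i} : ℝ); μ] ≤ ∑ i ∈ s, μ.real (A i) := by
  have hsum : (fun ω => (#{i ∈ s | ω ∈ A i} : ℝ)) = ∑ i ∈ s, (A i).indicator 1 := by
    ext ω
    rw [card_filter_mem_eq_sum_indicator, Finset.sum_apply]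
  rw [hsum, IndepFun.variance_sum (fun i _ => memLp_indicator_one 2 (hA i))
    fun i _ j _ hij => hind.iIndepFun_indicator.indepFun hij]
  exact sum_le_sum fun i _ => variance_indicator_one_le (hA i)

open Classical in
lemma measureReal_two_mul_card_filter_mem_le [IsProbabilityMeasure μ] (s : Finset ι)
    {A : ι → Set Ω} (hA : ∀ i, MeasurableSet (A i)) (hind : iIndepSet A μ) {M : ℝ} (hM : 0 < M)
    (hsum : ∑ i ∈ s, μ.real (A i) = M) :
    μ.real {ω | 2 * (#{i ∈ s | ω ∈ A i} : ℝ) ≤ M} ≤ 4 / M := by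
  set N : Ω → ℝ := fun ω => #{i ∈ s | ω ∈ A i}
  have hmean : ∫ ω, N ω ∂μ = M := (integral_card_filter_mem s hA).trans hsum
  have hvar : Var[N; μ] ≤ M := (variance_card_filter_mem_le s hA hind).trans_eq hsum
  have hdev : {ω | 2 * N ω ≤ M} ⊆ {ω | M / 2 ≤ |N ω - ∫ ω, N ω ∂μ|} := fun ω hω => by
    rw [Set.mem_ofPred_eq, hmean, abs_sub_comm]
    exact le_abs.2 (.inl (by linarith [Set.mem_ofPred_eq ▸ hω]))
  calc μ.real {ω | 2 * N ω ≤ M} ≤ μ.real {ω | M / 2 ≤ |N ω - ∫ ω, N ω ∂μ|} :=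
        measureReal_mono hdev
    _ ≤ Var[N; μ] / (M / 2) ^ 2 := ENNReal.toReal_le_of_le_ofReal
        (div_nonneg (variance_nonneg _ _) (sq_nonneg _))
        (meas_ge_le_variance_div_sq (memLp_card_filter_mem 2 s hA) (half_pos hM))
    _ ≤ M / (M / 2) ^ 2 := by gcongr
    _ = 4 / M := by field_simp; norm_num

end Probability

section RandomColouring

variable {V Γ : Type*} [Fintype V] [MeasurableSpace Γ] {ν : Measure Γ} [IsProbabilityMeasure ν]

variable (V ν) in
/-- The law of a random colouring of `V` in which the vertices receive independent colours, each
with law `ν`. -/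
noncomputable abbrev colouringLaw : Measure (V → Γ) := Measure.pi fun _ => ν

lemma measureReal_colour_mem (v : V) {J : Set Γ} (hJ : MeasurableSet J) :
    (colouringLaw V ν).real {c | c v ∈ J} = ν.real J :=
  congrArg ENNReal.toReal
    ((measurePreserving_eval (fun _ : V => ν) v).measure_preimage hJ.nullMeasurableSet)

lemma iIndepSet_colour_mem {J : Set Γ} (hJ : MeasurableSet J) :
    iIndepSet (fun v => {c : V → Γ | c v ∈ J}) (colouringLaw V ν) := by
  have hind := iIndepFun_pi (μ := fun _ : V => ν) (X := fun _ : V => id) fun _ => aemeasurable_id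
  refine (iIndepSet_iff_meas_biInter fun v => measurable_pi_apply v hJ).2 fun s => ?_
  exact hind.meas_biInter (s := fun v => {c : V → Γ | c v ∈ J}) fun v _ => ⟨J, hJ, rfl⟩

variable [Finite Γ] [DiscreteMeasurableSpace Γ]

lemma measureReal_and_of_dependsOn {p q : (V → Γ) → Prop} {s t : Finset V}
    (hst : Disjoint s t) (hp : DependsOn p s) (hq : DependsOn q t) :
    (colouringLaw V ν).real {c | p c ∧ q c}
      = (colouringLaw V ν).real {c | p c}
        * (colouringLaw V ν).real {c | q c} := by
  obtain ⟨p', rfl⟩ := dependsOn_iff_exists_comp.1 hp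
  obtain ⟨q', rfl⟩ := dependsOn_iff_exists_comp.1 hq
  have hind := iIndepFun_pi (μ := fun _ : V => ν) (X := fun _ : V => id) fun _ => aemeasurable_id
  simp only [measureReal_def, ← ENNReal.toReal_mul]
  exact congrArg ENNReal.toReal <|
    (hind.indepFun_finset s t hst fun v => measurable_pi_apply v).measure_inter_preimage_eq_mul
      {d | p' d} {d | q' d} .of_discrete .of_discrete

lemma measureReal_colour_eq_and {p : (V → Γ) → Prop} {v : V} (hp : DependsOn p {v}ᶜ) (j : Γ) :
    (colouringLaw V ν).real {c | c v = j ∧ p c}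
      = ν.real {j} * (colouringLaw V ν).real {c | p c} := by
  classical
  rw [← measureReal_colour_mem v (measurableSet_singleton j)]
  refine measureReal_and_of_dependsOn (s := {v}) (t := {v}ᶜ) disjoint_compl_right
    (fun c d h => ?_) (by rwa [coe_compl, coe_singleton])
  rw [h v (mem_singleton_self v)]

open Classical in
lemma measureReal_two_mul_card_filter_eq_le {F : Finset V} {j : Γ} (h : 0 < #F * ν.real {j}) :
    (colouringLaw V ν).real {c | 2 * (#{v ∈ F | c v = j} : ℝ) ≤ #F * ν.real {j}}
      ≤ 4 / (#F * ν.real {j}) := by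
  have hsum : ∑ v ∈ F, (colouringLaw V ν).real {c | c v ∈ ({j} : Set Γ)}
      = #F * ν.real {j} := by
    simp only [measureReal_colour_mem _ (measurableSet_singleton j), sum_const, nsmul_eq_mul]
  have := measureReal_two_mul_card_filter_mem_le F (fun _ => .of_discrete)
    (iIndepSet_colour_mem (measurableSet_singleton j)) h hsum
  simpa only [Set.mem_ofPred_eq, Set.mem_singleton_iff] using this

open Classical in
lemma measureReal_mul_card_le_card_filter_eq_and_not_le {F : Finset V} (hF : F.Nonempty) {j : Γ}
    (hj : 0 < ν.real {j}) {good : (V → Γ) → V → Prop} {ε : ℝ}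
    (hdep : ∀ v ∈ F, DependsOn (fun c => good c v) {v}ᶜ)
    (hε : ∀ v ∈ F, (colouringLaw V ν).real {c | ¬ good c v} ≤ ε) :
    (colouringLaw V ν).real
      {c | ν.real {j} / 4 * #F ≤ #{v ∈ F | c v = j ∧ ¬ good c v}} ≤ 4 * ε := by
  have hbad : ∀ v ∈ F,
      (colouringLaw V ν).real {c | c v = j ∧ ¬ good c v} ≤ ν.real {j} * ε := by
    intro v hv
    rw [measureReal_colour_eq_and fun c d h => congrArg Not (hdep v hv h)]
    gcongr
    exact hε v hv
  have := measureReal_mul_card_le_card_filter_mem_le hF (fun _ => .of_discrete)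
    (show 0 < ν.real {j} / 4 by positivity) hbad
  have hq : ν.real {j} * ε / (ν.real {j} / 4) = 4 * ε := by field_simp
  simpa only [Set.mem_ofPred_eq, hq] using this

open Classical in
/-- Chebyshev's inequality makes the colour class `j` large in `F`, and as the colour of `v` is
independent of the event `¬ good · v`, Markov's inequality makes its bad part small. -/
lemma measureReal_card_filter_eq_and_lt_le {F : Finset V} {j : Γ} {good : (V → Γ) → V → Prop}
    {m r ε : ℝ} (hr : 0 < r) (hmF : m ≤ #F) (hrm : 4 * r ≤ ν.real {j} * m)
    (hdep : ∀ v ∈ F, DependsOn (fun c => good c v) {v}ᶜ)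
    (hε : ∀ v ∈ F, (colouringLaw V ν).real {c | ¬ good c v} ≤ ε) :
    (colouringLaw V ν).real {c | (#{v ∈ F | c v = j ∧ good c v} : ℝ) < r}
      ≤ 4 / (ν.real {j} * m) + 4 * ε := by
  have hqm : 0 < ν.real {j} * m := by linarith
  have hq : 0 < ν.real {j} := measureReal_nonneg.lt_of_ne' (left_ne_zero_of_mul hqm.ne')
  have hle : ν.real {j} * m ≤ #F * ν.real {j} := by rw [mul_comm (#F : ℝ)]; gcongr
  have hF : F.Nonempty :=
    card_pos.1 (Nat.cast_pos.1 (pos_of_mul_pos_left (hqm.trans_le hle) hq.le))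
  have hsplit : {c : V → Γ | (#{v ∈ F | c v = j ∧ good c v} : ℝ) < r} ⊆
      {c | 2 * (#{v ∈ F | c v = j} : ℝ) ≤ #F * ν.real {j}}
        ∪ {c | ν.real {j} / 4 * #F ≤ #{v ∈ F | c v = j ∧ ¬ good c v}} := by
    intro c hc
    by_contra! h
    simp only [Set.mem_union, Set.mem_ofPred_eq, not_or, not_le] at h hc
    have hcard : (#{v ∈ F | c v = j} : ℝ)
        = #{v ∈ F | c v = j ∧ good c v} + #{v ∈ F | c v = j ∧ ¬ good c v} := by
      simp only [← filter_filter]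
      exact_mod_cast (card_filter_add_card_filter_not _).symm
    linarith
  calc _ ≤ 4 / (#F * ν.real {j}) + 4 * ε :=
        (measureReal_mono hsplit).trans <| (measureReal_union_le _ _).trans <|
          add_le_add (measureReal_two_mul_card_filter_eq_le (hqm.trans_le hle))
            (measureReal_mul_card_le_card_filter_eq_and_not_le hF hq hdep hε)
    _ ≤ _ := by gcongr

end RandomColouring

section Settled

variable {V Γ : Type*}

open Classical in
/-- More than `k` vertices of `s` have colour `j` and satisfy `p`. -/
def ManyColoured (k : ℕ) (j : Γ) (c : V → Γ) (s : Finset V) (p : V → Prop) : Prop :=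
  k < #{v ∈ s | c v = j ∧ p v}

lemma dependsOn_manyColoured {k : ℕ} {j : Γ} {s : Finset V} {S : Set V}
    {p : (V → Γ) → V → Prop} (hpS : ∀ c, ∀ v ∈ s, p c v → v ∈ S)
    (hp : ∀ v ∈ s, DependsOn (fun c => p c v) S) :
    DependsOn (fun c => ManyColoured k j c s (p c)) S := by
  classical
  intro c d h
  have hiff : ∀ v ∈ s, (c v = j ∧ p c v ↔ d v = j ∧ p d v) := fun v hv => by
    have hpv : p c v = p d v := hp v hv h
    rw [hpv]
    exact and_congr_left fun hv' => by rw [h v (hpS d v hv hv')]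
  simp only [ManyColoured, filter_congr hiff]

variable [Fintype V]

lemma measureReal_not_manyColoured_le [Finite Γ] [MeasurableSpace Γ] [DiscreteMeasurableSpace Γ]
    {ν : Measure Γ} [IsProbabilityMeasure ν] {k : ℕ} {j : Γ} {s : Finset V} {m ε : ℝ}
    {P : V → Prop} {good : (V → Γ) → V → Prop} (hs : ManyIn s m P)
    (hm : 4 * (k + 1) ≤ ν.real {j} * m)
    (hdep : ∀ v ∈ s, P v → DependsOn (fun c => good c v) {v}ᶜ)
    (hε : ∀ v ∈ s, P v → (colouringLaw V ν).real {c | ¬ good c v} ≤ ε) :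
    (colouringLaw V ν).real {c | ¬ ManyColoured k j c s (good c)}
      ≤ 4 / (ν.real {j} * m) + 4 * ε := by
  classical
  obtain ⟨F, hFs, hmF, hP⟩ := hs
  refine (measureReal_mono fun c hc => ?_).trans <|
    measureReal_card_filter_eq_and_lt_le (by positivity) hmF hm
      (fun v hv => hdep v (hFs hv) (hP v hv)) fun v hv => hε v (hFs hv) (hP v hv)
  have hle : #{v ∈ F | c v = j ∧ good c v} ≤ k :=
    (card_le_card (filter_subset_filter _ hFs)).trans (by simpa [ManyColoured] using hc)
  exact_mod_cast Nat.lt_succ_of_le hle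

variable (E : V → V → Prop) [DecidableRel E] (k : ℕ) (j : Γ) (e₁ e₂ e₃ e₄ : V → Prop)

/-- The vertex satisfies `e₁`, or satisfies `e₂` and has more than `k` in-neighbours of
colour `j` satisfying `e₁`. The conditions `e₁`, …, `e₄` stand for the four cases (E1)–(E4) of
eligibility. -/
def LinkedOut (c : V → Γ) (v : V) : Prop :=
  e₁ v ∨ e₂ v ∧ ManyColoured k j c (inN E v) e₁

/-- The vertex satisfies one of `e₁`, …, `e₄`, and the in- and out-neighbours which that
condition promises occur in colour `j` more than `k` times. -/
def Settled (c : V → Γ) (v : V) : Prop :=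
  LinkedOut E k j e₁ e₂ c v ∨
    e₃ v ∧ ManyColoured k j c (outN E v) (LinkedOut E k j e₁ e₂ c) ∨
    e₄ v ∧ ManyColoured k j c (inN E v) e₁ ∧
      ManyColoured k j c (outN E v) (LinkedOut E k j e₁ e₂ c)

variable {E k j e₁ e₂ e₃ e₄}

lemma dependsOn_manyColoured_inN (hE : ∀ v, ¬ E v v) (v : V) :
    DependsOn (fun c => ManyColoured k j c (inN E v) e₁) {w | e₁ w ∧ w ≠ v} := by
  refine dependsOn_manyColoured (p := fun _ => e₁) (fun _ w hw he => ⟨he, ?_⟩)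
    fun _ _ _ _ _ => rfl
  rintro rfl
  exact hE w (mem_filter.1 hw).2

lemma dependsOn_linkedOut (hE : ∀ v, ¬ E v v) (v : V) :
    DependsOn (fun c => LinkedOut E k j e₁ e₂ c v) {w | e₁ w ∧ w ≠ v} := fun _ _ h =>
  congrArg (fun M => e₁ v ∨ e₂ v ∧ M) (dependsOn_manyColoured_inN hE v h)

/-- If `e₁ v` holds then `v` is settled whatever the colours are; otherwise the colour of `v` is
never inspected. -/
lemma dependsOn_settled (hE : ∀ v, ¬ E v v) (v : V) :
    DependsOn (fun c => Settled E k j e₁ e₂ e₃ e₄ c v) {v}ᶜ := by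
  by_cases hv : e₁ v
  · exact fun c d _ => propext (iff_of_true (.inl (.inl hv)) (.inl (.inl hv)))
  have hsub : ∀ w, {x | e₁ x ∧ x ≠ w} ⊆ ({v}ᶜ : Set V) := by
    rintro w x ⟨hx, -⟩ rfl
    exact hv hx
  have hout : DependsOn
      (fun c => ManyColoured k j c (outN E v) (LinkedOut E k j e₁ e₂ c)) {v}ᶜ := by
    refine dependsOn_manyColoured (fun _ w hw _ => ?_)
      fun w _ => (dependsOn_linkedOut hE w).mono (hsub w)
    rintro rfl
    exact hE w (mem_filter.1 hw).2
  intro c d h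
  have hlinked := (dependsOn_linkedOut (k := k) (j := j) (e₂ := e₂) hE v).mono (hsub v) h
  have hin := (dependsOn_manyColoured_inN (k := k) (j := j) hE v).mono (hsub v) h
  simp only [Settled, hlinked, hin, hout h]

variable [Finite Γ] [MeasurableSpace Γ] [DiscreteMeasurableSpace Γ] {ν : Measure Γ}
  [IsProbabilityMeasure ν] {m : ℝ}

lemma measureReal_not_manyColoured_const_le (hm : 4 * (k + 1) ≤ ν.real {j} * m) {s : Finset V}
    (hs : ManyIn s m e₁) :
    (colouringLaw V ν).real {c | ¬ ManyColoured k j c s e₁} ≤ 4 / (ν.real {j} * m) := by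
  simpa using measureReal_not_manyColoured_le hs hm (good := fun _ => e₁) (ε := 0)
    (fun _ _ _ _ _ _ => rfl) fun v _ hv => by simp [hv]

lemma measureReal_not_linkedOut_le (hm : 4 * (k + 1) ≤ ν.real {j} * m)
    (h₂ : ∀ v, e₂ v → ManyIn (inN E v) m e₁) {v : V} (hv : e₁ v ∨ e₂ v) :
    (colouringLaw V ν).real {c | ¬ LinkedOut E k j e₁ e₂ c v} ≤ 4 / (ν.real {j} * m) := by
  rcases hv with hv | hv
  · have hqm : 0 < ν.real {j} * m := hm.trans_lt' (by positivity)
    simp only [LinkedOut, hv, true_or, not_true_eq_false, Set.ofPred_false, measureReal_empty]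
    positivity
  · exact (measureReal_mono <| Set.ofPred_subset_ofPred.2 fun _ => mt fun h => .inr ⟨hv, h⟩).trans
      (measureReal_not_manyColoured_const_le hm (h₂ v hv))

lemma measureReal_not_manyColoured_linkedOut_le (hE : ∀ v, ¬ E v v)
    (hm : 4 * (k + 1) ≤ ν.real {j} * m) (h₂ : ∀ v, e₂ v → ManyIn (inN E v) m e₁)
    {s : Finset V} (hs : ManyIn s m fun v => e₁ v ∨ e₂ v) :
    (colouringLaw V ν).real {c | ¬ ManyColoured k j c s (LinkedOut E k j e₁ e₂ c)}
      ≤ 5 * (4 / (ν.real {j} * m)) := by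
  have := measureReal_not_manyColoured_le hs hm
    (fun v _ _ => (dependsOn_linkedOut hE v).mono fun _ h => h.2)
    fun v _ hv => measureReal_not_linkedOut_le hm h₂ hv
  linarith

lemma measureReal_not_settled_le (hE : ∀ v, ¬ E v v) (hm : 4 * (k + 1) ≤ ν.real {j} * m)
    (h₂ : ∀ v, e₂ v → ManyIn (inN E v) m e₁)
    (h₃ : ∀ v, e₃ v → ManyIn (outN E v) m fun w => e₁ w ∨ e₂ w)
    (h₄ : ∀ v, e₄ v → ManyIn (inN E v) m e₁ ∧ ManyIn (outN E v) m fun w => e₁ w ∨ e₂ w)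
    {v : V} (hv : e₁ v ∨ e₂ v ∨ e₃ v ∨ e₄ v) :
    (colouringLaw V ν).real {c | ¬ Settled E k j e₁ e₂ e₃ e₄ c v}
      ≤ 6 * (4 / (ν.real {j} * m)) := by
  have hqm : 0 < ν.real {j} * m := hm.trans_lt' (by positivity)
  have hε : 0 ≤ 4 / (ν.real {j} * m) := by positivity
  rw [← or_assoc] at hv
  rcases hv with hv | hv | hv
  · refine (measureReal_mono <| Set.ofPred_subset_ofPred.2 fun _ => mt .inl).trans
      ((measureReal_not_linkedOut_le hm h₂ hv).trans ?_)
    linarith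
  · refine (measureReal_mono <|
      Set.ofPred_subset_ofPred.2 fun _ => mt fun h => .inr (.inl ⟨hv, h⟩)).trans
      ((measureReal_not_manyColoured_linkedOut_le hE hm h₂ (h₃ v hv)).trans ?_)
    linarith
  · have hsub : {c | ¬ Settled E k j e₁ e₂ e₃ e₄ c v} ⊆
        {c | ¬ ManyColoured k j c (inN E v) e₁}
          ∪ {c | ¬ ManyColoured k j c (outN E v) (LinkedOut E k j e₁ e₂ c)} := by
      intro c hc
      by_contra! h
      simp only [Set.mem_union, Set.mem_ofPred_eq, not_or, not_not] at h
      exact hc (.inr (.inr ⟨hv, h⟩))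
    refine (measureReal_mono hsub).trans ((measureReal_union_le _ _).trans ?_)
    have hin := measureReal_not_manyColoured_const_le hm (h₄ v hv).1
    have hout := measureReal_not_manyColoured_linkedOut_le hE hm h₂ (h₄ v hv).2
    linarith

lemma measureReal_not_manyColoured_settled_le (hE : ∀ v, ¬ E v v)
    (hm : 4 * (k + 1) ≤ ν.real {j} * m) (h₂ : ∀ v, e₂ v → ManyIn (inN E v) m e₁)
    (h₃ : ∀ v, e₃ v → ManyIn (outN E v) m fun w => e₁ w ∨ e₂ w)
    (h₄ : ∀ v, e₄ v → ManyIn (inN E v) m e₁ ∧ ManyIn (outN E v) m fun w => e₁ w ∨ e₂ w)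
    {s : Finset V} (hs : ManyIn s m fun v => e₁ v ∨ e₂ v ∨ e₃ v ∨ e₄ v) :
    (colouringLaw V ν).real {c | ¬ ManyColoured k j c s (Settled E k j e₁ e₂ e₃ e₄ c)}
      ≤ 100 / (ν.real {j} * m) :=
  calc _ ≤ 4 / (ν.real {j} * m) + 4 * (6 * (4 / (ν.real {j} * m))) :=
        measureReal_not_manyColoured_le hs hm (fun v _ _ => dependsOn_settled hE v)
          fun v _ hv => measureReal_not_settled_le hE hm h₂ h₃ h₄ hv
    _ = 100 / (ν.real {j} * m) := by ring

end Settled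

section Connectivity

variable {V I : Type*} {E : V → V → Prop} {G : GadgetSystem V I} {S : Set V} {L B : Finset I}
  {k : ℕ} {x y : V}

/-- The gadget system of the reversed digraph `flip E`, in which the roles of `S⁺` and `S⁻` and
of `s⁺` and `s⁻` are exchanged. Statements on in-neighbours are derived from it. -/
def GadgetSystem.reverse (G : GadgetSystem V I) : GadgetSystem V I where
  U := G.U
  S := G.S
  Sp := G.Sm
  Sm := G.Sp
  X := G.X
  sp := G.sm
  sm := G.sp
  sp_mem := G.sm_mem
  sm_mem := G.sp_mem
  Sp_subset := G.Sm_subset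
  Sm_subset := G.Sp_subset
  S_subset := G.S_subset

lemma reachWithin_flip : ReachWithin (flip E) S x y ↔ ReachWithin E S y x := by
  rw [ReachWithin, ReachWithin, ← Relation.reflTransGen_swap (a := x)]
  refine iff_of_eq (congrArg (Relation.ReflTransGen · x y) ?_)
  ext a b
  exact and_left_comm

lemma ReachWithin.mono {S' : Set V} (hS : S ⊆ S') (h : ReachWithin E S x y) :
    ReachWithin E S' x y :=
  Relation.ReflTransGen.mono (fun _ _ hab => ⟨hS hab.1, hS hab.2.1, hab.2.2⟩) _ _ h

lemma CondG4.reverse [DecidableEq V] (h : CondG4 E G) : CondG4 (flip E) G.reverse :=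
  fun α v hv => (h α v hv).symm

lemma card_filter_not_disjoint_le [DecidableEq V] (h1 : CondG1 G) (B : Finset I) (Z : Finset V) :
    #{α ∈ B | ¬ Disjoint (G.U α) Z} ≤ #Z := by
  have hdisj : (({α ∈ B | ¬ Disjoint (G.U α) Z} : Finset I) : Set I).PairwiseDisjoint
      fun α => G.U α ∩ Z := fun α _ β _ h =>
    (h1 α β h).mono inter_subset_left inter_subset_left
  refine (card_le_card_biUnion hdisj fun α hα => ?_).trans
    (card_le_card (biUnion_subset.2 fun _ _ => inter_subset_right))
  exact not_disjoint_iff_nonempty_inter.1 (mem_filter.1 hα).2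

lemma card_le_of_forall_subset (h1 : CondG1 G) {D : Finset V} (hD : ∀ α ∈ B, G.U α ⊆ D) :
    #B ≤ #D := by
  classical
  refine le_of_eq_of_le ?_ (card_filter_not_disjoint_le h1 B D)
  rw [filter_true_of_mem fun α hα => ?_]
  exact not_disjoint_iff.2 ⟨G.sp α, G.S_subset α (G.sp_mem α),
    hD α hα (G.S_subset α (G.sp_mem α))⟩

variable [Fintype V] [DecidableEq V]

open Classical in
lemma missOut_reachWithin_subset (L : Finset I) (h : ReachWithin E S x y) :
    MissOut (ReachWithin E S) G L x ⊆ MissOut (ReachWithin E S) G L y :=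
  monotone_filter_right _ fun _ _ hx v hv hyv => hx v hv (h.trans hyv)

open Classical in
lemma missOut_reachWithin_subset_missOut [DecidableRel E] (hLB : L ⊆ B)
    (hL : ∀ α ∈ L, (G.U α : Set V) ⊆ S) (hx : x ∈ S) :
    MissOut (ReachWithin E S) G L x ⊆ MissOut E G B x := fun α hα => by
  obtain ⟨hαL, hα⟩ := mem_filter.1 hα
  exact mem_filter.2 ⟨hLB hαL, fun v hv h => hα v hv <|
    .single ⟨hx, hL α hαL (G.S_subset α (G.Sm_subset α hv)), h⟩⟩

open Classical in
lemma reachWithin_of_card_missOut_add_lt (h3 : CondG3 E G) (hL : ∀ α ∈ L, (G.U α : Set V) ⊆ S)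
    (h : #(MissOut (ReachWithin E S) G L x)
      + #(MissOut (ReachWithin (flip E) S) G.reverse L y) < #L) :
    ReachWithin E S x y := by
  obtain ⟨α, hα, hαxy⟩ := exists_mem_notMem_of_card_lt_card ((card_union_le _ _).trans_lt h)
  simp only [MissOut, mem_union, mem_filter, hα, true_and, not_or, not_forall, not_not] at hαxy
  obtain ⟨⟨a, ha, hxa⟩, b, hb, hyb⟩ := hαxy
  exact (hxa.trans ((h3 α a ha b hb).mono (hL α hα))).trans (reachWithin_flip.1 hyb)

instance [DecidableRel E] : DecidableRel (flip E) :=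
  fun x y => inferInstanceAs (Decidable (E y x))

variable [DecidableRel E] {A Z : Finset V}

/-- `A` collects the paths leaving the gadgets of `B`: each vertex of `A` sends an edge into
`S⁻(α)` for all but at most `k` of the gadgets, or has more than `k` out-neighbours in `A` that
do, and each vertex of each `S(α)` has more than `k` out-neighbours in `A ∖ X(α)`. -/
def OutAbsorbing (E : V → V → Prop) [DecidableRel E] (G : GadgetSystem V I) (k : ℕ)
    (B : Finset I) (A : Finset V) : Prop :=
  (∀ x ∈ A, #(MissOut E G B x) ≤ k ∨ k < #{y ∈ outN E x ∩ A | #(MissOut E G B y) ≤ k}) ∧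
    ∀ α ∈ B, ∀ u ∈ G.S α, k < #((outN E u \ G.X α) ∩ A)

namespace OutAbsorbing

open Classical in
lemma card_missOut_reachWithin_le_of_mem (h : OutAbsorbing E G k B A) (hZ : #Z ≤ k)
    (hLB : L ⊆ B) (hL : ∀ α ∈ L, (G.U α : Set V) ⊆ S) (hA : ∀ x ∈ A, x ∉ Z → x ∈ S)
    (hx : x ∈ A) (hxZ : x ∉ Z) : #(MissOut (ReachWithin E S) G L x) ≤ k := by
  have hout : ∀ y ∈ A, y ∉ Z → #(MissOut (ReachWithin E S) G L y) ≤ #(MissOut E G B y) :=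
    fun y hy hyZ => card_le_card (missOut_reachWithin_subset_missOut hLB hL (hA y hy hyZ))
  rcases h.1 x hx with hmiss | hmany
  · exact (hout x hx hxZ).trans hmiss
  · obtain ⟨y, hy, hyZ⟩ := exists_mem_notMem_of_card_lt_card (hZ.trans_lt hmany)
    simp only [outN, mem_filter, mem_inter, mem_univ, true_and] at hy
    obtain ⟨⟨hxy, hyA⟩, hmiss⟩ := hy
    have hstep : MissOut (ReachWithin E S) G L x ⊆ MissOut (ReachWithin E S) G L y :=
      missOut_reachWithin_subset L (.single ⟨hA x hx hxZ, hA y hyA hyZ, hxy⟩)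
    exact (card_le_card hstep).trans ((hout y hyA hyZ).trans hmiss)

/-- A vertex of `U(α) ∖ S(α)` leaves through an out-neighbour of `s⁻(α)`, by (G4). -/
lemma exists_adj_of_mem (h : OutAbsorbing E G k B A) (h4 : CondG4 E G) (hZ : #Z ≤ k) {α : I}
    (hα : α ∈ B) (hx : x ∈ G.U α) : ∃ y ∈ A, y ∉ Z ∧ E x y := by
  obtain ⟨u, huS, hu⟩ : ∃ u ∈ G.S α, ∀ y ∉ G.X α, E u y → E x y := by
    by_cases hxS : x ∈ G.S α
    · exact ⟨x, hxS, fun _ _ => id⟩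
    · exact ⟨G.sm α, G.sm_mem α, fun y hy hE => (h4 α y hy).2 hE x (mem_sdiff.2 ⟨hx, hxS⟩)⟩
  obtain ⟨y, hy, hyZ⟩ := exists_mem_notMem_of_card_lt_card (hZ.trans_lt (h.2 α hα u huS))
  simp only [outN, mem_inter, mem_sdiff, mem_filter, mem_univ, true_and] at hy
  exact ⟨y, hy.2, hyZ, hu y hy.1.2 hy.1.1⟩

open Classical in
lemma card_missOut_reachWithin_le (h : OutAbsorbing E G k B A) (h4 : CondG4 E G) (hZ : #Z ≤ k)
    (hx : x ∈ (B.biUnion G.U ∪ A) \ Z) :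
    #(MissOut (ReachWithin E (((B.biUnion G.U ∪ A) \ Z : Finset V) : Set V)) G
      {α ∈ B | Disjoint (G.U α) Z} x) ≤ k := by
  set S : Set V := (((B.biUnion G.U ∪ A) \ Z : Finset V) : Set V)
  have hL : ∀ α ∈ ({α ∈ B | Disjoint (G.U α) Z} : Finset I), (G.U α : Set V) ⊆ S := by
    intro α hα
    rw [coe_subset, subset_sdiff]
    exact ⟨(subset_biUnion_of_mem G.U (mem_filter.1 hα).1).trans subset_union_left,
      (mem_filter.1 hα).2⟩
  have hA : ∀ y ∈ A, y ∉ Z → y ∈ S := fun y hy hyZ =>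
    mem_sdiff.2 ⟨mem_union_right _ hy, hyZ⟩
  have hmem : ∀ {y}, y ∈ A → y ∉ Z →
      #(MissOut (ReachWithin E S) G {α ∈ B | Disjoint (G.U α) Z} y) ≤ k :=
    h.card_missOut_reachWithin_le_of_mem hZ (filter_subset _ _) hL hA
  obtain ⟨hxU | hxA, hxZ⟩ := mem_sdiff.1 hx |>.imp_left mem_union.1
  · obtain ⟨α, hα, hxα⟩ := mem_biUnion.1 hxU
    obtain ⟨y, hy, hyZ, hxy⟩ := h.exists_adj_of_mem h4 hZ hα hxα
    have hstep : MissOut (ReachWithin E S) G {α ∈ B | Disjoint (G.U α) Z} x ⊆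
        MissOut (ReachWithin E S) G {α ∈ B | Disjoint (G.U α) Z} y :=
      missOut_reachWithin_subset _ (.single ⟨hx, hA y hy hyZ, hxy⟩)
    exact (card_le_card hstep).trans (hmem hy hyZ)
  · exact hmem hxA hxZ

end OutAbsorbing

theorem stronglyKConnectedOn_biUnion_union (h1 : CondG1 G) (h3 : CondG3 E G) (h4 : CondG4 E G)
    (hB : 3 * k < #B) (hout : OutAbsorbing E G k B A)
    (hin : OutAbsorbing (flip E) G.reverse k B A) :
    StronglyKConnectedOn E k (B.biUnion G.U ∪ A) := by
  classical
  refine ⟨?_, fun Z hZ x hx y hy => ?_⟩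
  · have := card_le_of_forall_subset (B := B) (D := B.biUnion G.U ∪ A) h1 fun α hα =>
      (subset_biUnion_of_mem G.U hα).trans subset_union_left
    omega
  have hintact : #B ≤ #{α ∈ B | Disjoint (G.U α) Z} + #Z :=
    (card_filter_add_card_filter_not _).ge.trans
      (Nat.add_le_add_left (card_filter_not_disjoint_le h1 B Z) _)
  have hxout := hout.card_missOut_reachWithin_le h4 hZ (mem_coe.1 hx)
  have hyin := hin.card_missOut_reachWithin_le h4.reverse hZ (mem_coe.1 hy)
  refine reachWithin_of_card_missOut_add_lt h3 (L := {α ∈ B | Disjoint (G.U α) Z}) ?_ ?_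
  · intro α hα
    rw [coe_subset, subset_sdiff]
    exact ⟨(subset_biUnion_of_mem G.U (mem_filter.1 hα).1).trans subset_union_left,
      (mem_filter.1 hα).2⟩
  · exact (add_le_add hxout hyin).trans_lt (by omega)

end Connectivity

section Groups

variable {V I Γ : Type*}

lemma ManyIn.mono {α : Type*} {s s' : Finset α} {m : ℝ} {P Q : α → Prop} (h : ManyIn s m P)
    (hPQ : ∀ x ∈ s, P x → x ∈ s' ∧ Q x) : ManyIn s' m Q := by
  obtain ⟨F, hF, hm, hP⟩ := h
  exact ⟨F, fun x hx => (hPQ x (hF hx) (hP x hx)).1, hm,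
    fun x hx => (hPQ x (hF hx) (hP x hx)).2⟩

lemma ManyIn.sdiff {α : Type*} [DecidableEq α] {s Z : Finset α} {m m' : ℝ} {P : α → Prop}
    (h : ManyIn s m P) (hm : m' + #Z ≤ m) : ManyIn (s \ Z) m' P := by
  obtain ⟨F, hF, hmF, hP⟩ := h
  refine ⟨F \ Z, sdiff_subset_sdiff hF le_rfl, ?_, fun x hx => hP x (mem_sdiff.1 hx).1⟩
  have hle : (#F : ℝ) ≤ #(F \ Z) + #Z := by exact_mod_cast card_le_card_sdiff_add_card
  linarith

lemma ManyColoured.lt_card {k : ℕ} {j : Γ} {c : V → Γ} {s F : Finset V} {p : V → Prop}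
    (h : ManyColoured k j c s p) (hF : ∀ v ∈ s, c v = j → p v → v ∈ F) : k < #F := by
  classical
  refine lt_of_lt_of_le h (card_le_card fun v hv => ?_)
  obtain ⟨hvs, hvj, hvp⟩ := mem_filter.1 hv
  exact hF v hvs hvj hvp

variable [Fintype V] [DecidableEq V] {E : V → V → Prop} [DecidableRel E] {G : GadgetSystem V I}
  {k t : ℕ} {m : ℝ} {𝒜 : Finset I} {W W' : Finset V} {u : V}

lemma card_le_card_outN_inter_add_card_missOut {D : Finset V} (h1 : CondG1 G)
    (hD : ∀ α ∈ 𝒜, G.U α ⊆ D) (u : V) : #𝒜 ≤ #(outN E u ∩ D) + #(MissOut E G 𝒜 u) := by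
  refine (card_filter_add_card_filter_not fun α => ∀ v ∈ G.Sm α, ¬ E u v).ge.trans ?_
  rw [add_comm]
  refine Nat.add_le_add_right ((card_le_card ?_).trans
    (card_filter_not_disjoint_le h1 𝒜 (outN E u ∩ D))) _
  refine monotone_filter_right _ fun α hα hmeet => ?_
  simp only [not_forall, not_not] at hmeet
  obtain ⟨v, hv, huv⟩ := hmeet
  have hvU := G.S_subset α (G.Sm_subset α hv)
  exact not_disjoint_iff.2
    ⟨v, hvU, mem_inter.2 ⟨mem_filter.2 ⟨mem_univ v, huv⟩, hD α hα hvU⟩⟩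

variable [Fintype I]

lemma Nice1.mono (hW : W ⊆ W') (h : Nice1 E G k t 𝒜 W u) : Nice1 E G k t 𝒜 W' u :=
  ⟨inter_subset_inter_left hW h.1, h.2⟩

lemma Nice2.mono (hW : W ⊆ W') (h : Nice2 E G k t m 𝒜 W u) : Nice2 E G k t m 𝒜 W' u :=
  ⟨inter_subset_inter_left hW h.1, h.2.1, h.2.2.mono fun _ hx h => ⟨hx, h.mono hW⟩⟩

lemma Nice3.mono (hW : W ⊆ W') (h : Nice3 E G k t m 𝒜 W u) : Nice3 E G k t m 𝒜 W' u :=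
  ⟨inter_subset_inter_left hW h.1, h.2.1, h.2.2.mono fun _ hx h =>
    ⟨hx, h.imp (Nice1.mono hW) (Nice2.mono hW)⟩⟩

lemma Nice4.mono (hW : W ⊆ W') (h : Nice4 E G k t m 𝒜 W u) : Nice4 E G k t m 𝒜 W' u :=
  ⟨inter_subset_inter_left hW h.1, h.2.1.mono fun _ hx h => ⟨hx, h.mono hW⟩,
    h.2.2.mono fun _ hx h => ⟨hx, h.imp (Nice1.mono hW) (Nice2.mono hW)⟩⟩

lemma NiceFor.mono (hW : W ⊆ W') (h : NiceFor E G k t m 𝒜 W u) :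
    NiceFor E G k t m 𝒜 W' u :=
  h.imp (Nice1.mono hW) (Or.imp (Nice2.mono hW) (Or.imp (Nice3.mono hW) (Nice4.mono hW)))

lemma NiceFor.mem (h : NiceFor E G k t m 𝒜 W u) : u ∈ W := by
  rcases h with h | h | h | h <;> exact (mem_inter.1 h.1).2

lemma NiceFor.nice1_of_mem_Vgood (h : NiceFor E G k t m 𝒜 W u) (hu : u ∈ Vgood E G k t) :
    Nice1 E G k t 𝒜 W u := by
  simp only [Vgood, VgoodP, VgoodM, mem_inter, mem_sdiff] at hu
  rcases h with h | h | h | h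
  · exact h
  all_goals
    have h' := h.1
    simp only [Vbad, VgoodP, VgoodM, mem_inter, mem_sdiff] at h'
    tauto

variable (E G k t m 𝒜 W)

/-- `v` is settled with respect to the four cases (E1)–(E4) of eligibility for `𝒜` in `W`. -/
def SettledFor (j : Γ) (c : V → Γ) (v : V) : Prop :=
  Settled E k j (Nice1 E G k t 𝒜 W) (Nice2 E G k t m 𝒜 W) (Nice3 E G k t m 𝒜 W)
    (Nice4 E G k t m 𝒜 W) c v

open Classical in
/-- The settled vertices of colour `j`. Adding them to the gadgets of `𝒜` produces a strongly
`k`-connected set if `c` is `WellColoured`. -/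
noncomputable def settledFinset (j : Γ) (c : V → Γ) : Finset V :=
  {v | c v = j ∧ SettledFor E G k t m 𝒜 W j c v}

/-- Each vertex of each `S(α)`, `α ∈ 𝒜`, has more than `k` settled out-neighbours and more than
`k` settled in-neighbours of colour `j` outside `X(α)`. -/
def WellColoured (j : Γ) (c : V → Γ) : Prop :=
  ∀ α ∈ 𝒜, ∀ u ∈ G.S α,
    ManyColoured k j c (outN E u \ G.X α) (SettledFor E G k t m 𝒜 W j c) ∧
      ManyColoured k j c (inN E u \ G.X α) (SettledFor E G k t m 𝒜 W j c)

variable {E G k t m 𝒜 W} {j : Γ} {c : V → Γ}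

lemma mem_settledFinset :
    u ∈ settledFinset E G k t m 𝒜 W j c ↔ c u = j ∧ SettledFor E G k t m 𝒜 W j c u := by
  simp [settledFinset]

lemma SettledFor.mem (h : SettledFor E G k t m 𝒜 W j c u) : u ∈ W := by
  rcases h with (h | h) | h | h
  · exact (mem_inter.1 h.1).2
  all_goals exact (mem_inter.1 h.1.1).2

lemma measureReal_not_manyColoured_sdiff_le [Finite Γ] [MeasurableSpace Γ]
    [DiscreteMeasurableSpace Γ] {ν : Measure Γ} [IsProbabilityMeasure ν] (hE : ∀ v, ¬ E v v)
    (hm : 4 * (k + 1) ≤ ν.real {j} * m) {s X : Finset V}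
    (hs : ManyIn s m (NiceFor E G k t m 𝒜 (W \ X))) :
    (colouringLaw V ν).real {c | ¬ ManyColoured k j c (s \ X) (SettledFor E G k t m 𝒜 W j c)}
      ≤ 100 / (ν.real {j} * m) :=
  measureReal_not_manyColoured_settled_le hE hm (fun _ hv => hv.2.2) (fun _ hv => hv.2.2)
    (fun _ hv => hv.2) (hs.mono fun _ hx hn =>
      ⟨mem_sdiff.2 ⟨hx, (mem_sdiff.1 hn.mem).2⟩, hn.mono sdiff_subset⟩)

lemma measureReal_not_wellColoured_le [Finite Γ] [MeasurableSpace Γ] [DiscreteMeasurableSpace Γ]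
    {ν : Measure Γ} [IsProbabilityMeasure ν] {r : ℕ} (hE : ∀ v, ¬ E v v)
    (hm : 4 * (k + 1) ≤ ν.real {j} * m) (hr : ∀ α ∈ 𝒜, #(G.S α) ≤ r)
    (h : ∀ α ∈ 𝒜, ∀ u ∈ G.S α,
      ManyIn (outN E u) m (NiceFor E G k t m 𝒜 (W \ G.X α)) ∧
        ManyIn (inN E u) m (NiceFor E G k t m 𝒜 (W \ G.X α))) :
    (colouringLaw V ν).real {c | ¬ WellColoured E G k t m 𝒜 W j c}
      ≤ #𝒜 * (r * (200 / (ν.real {j} * m))) := by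
  have hsub : {c | ¬ WellColoured E G k t m 𝒜 W j c} ⊆ ⋃ α ∈ 𝒜, ⋃ u ∈ G.S α,
      ({c | ¬ ManyColoured k j c (outN E u \ G.X α) (SettledFor E G k t m 𝒜 W j c)} ∪
        {c | ¬ ManyColoured k j c (inN E u \ G.X α) (SettledFor E G k t m 𝒜 W j c)}) := by
    intro c hc
    simp only [Set.mem_iUnion, Set.mem_union, Set.mem_ofPred_eq]
    by_contra! hcon
    exact hc hcon
  have hqm : 0 < ν.real {j} * m := hm.trans_lt' (by positivity)
  calc _ ≤ ∑ α ∈ 𝒜, ∑ u ∈ G.S α, 200 / (ν.real {j} * m) := by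
        refine (measureReal_mono hsub (measure_ne_top _ _)).trans <|
          (measureReal_biUnion_finset_le _ _).trans <| sum_le_sum fun α hα =>
            (measureReal_biUnion_finset_le _ _).trans <| sum_le_sum fun u hu =>
              (measureReal_union_le _ _).trans ?_
        exact (add_le_add (measureReal_not_manyColoured_sdiff_le hE hm (h α hα u hu).1)
          (measureReal_not_manyColoured_sdiff_le hE hm (h α hα u hu).2)).trans_eq (by ring)
    _ = ∑ α ∈ 𝒜, #(G.S α) * (200 / (ν.real {j} * m)) := by simp only [sum_const, nsmul_eq_mul]
    _ ≤ ∑ α ∈ 𝒜, r * (200 / (ν.real {j} * m)) := by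
        gcongr with α hα
        exact_mod_cast hr α hα
    _ = #𝒜 * (r * (200 / (ν.real {j} * m))) := by rw [sum_const, nsmul_eq_mul]

lemma LinkedOut.card_missOut_le
    (h : LinkedOut E k j (Nice1 E G k t 𝒜 W) (Nice2 E G k t m 𝒜 W) c u) :
    #(MissOut E G 𝒜 u) ≤ k :=
  h.elim (fun h => h.2.1) fun h => h.1.2.1

lemma WellColoured.outAbsorbing (h : WellColoured E G k t m 𝒜 W j c) :
    OutAbsorbing E G k 𝒜 (settledFinset E G k t m 𝒜 W j c) := by
  have hmany : ∀ {v : V}, ManyColoured k j c (outN E v)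
      (LinkedOut E k j (Nice1 E G k t 𝒜 W) (Nice2 E G k t m 𝒜 W) c) →
      k < #{y ∈ outN E v ∩ settledFinset E G k t m 𝒜 W j c | #(MissOut E G 𝒜 y) ≤ k} :=
    fun hv => hv.lt_card fun y hy hyj hlinked => mem_filter.2
      ⟨mem_inter.2 ⟨hy, mem_settledFinset.2 ⟨hyj, .inl hlinked⟩⟩, hlinked.card_missOut_le⟩
  refine ⟨fun v hv => ?_, fun α hα u hu => (h α hα u hu).1.lt_card fun v hv hvj hsettled =>
    mem_inter.2 ⟨hv, mem_settledFinset.2 ⟨hvj, hsettled⟩⟩⟩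
  rcases (mem_settledFinset.1 hv).2 with hlinked | hv | hv
  · exact .inl hlinked.card_missOut_le
  · exact .inr (hmany hv.2)
  · exact .inr (hmany hv.2.2)

lemma WellColoured.outAbsorbing_reverse (h : WellColoured E G k t m 𝒜 W j c) :
    OutAbsorbing (flip E) G.reverse k 𝒜 (settledFinset E G k t m 𝒜 W j c) := by
  have hmany : ∀ {v : V}, ManyColoured k j c (inN E v) (Nice1 E G k t 𝒜 W) →
      k < #{y ∈ inN E v ∩ settledFinset E G k t m 𝒜 W j c | #(MissIn E G 𝒜 y) ≤ k} :=
    fun hv => hv.lt_card fun y hy hyj hnice => mem_filter.2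
      ⟨mem_inter.2 ⟨hy, mem_settledFinset.2 ⟨hyj, .inl (.inl hnice)⟩⟩, hnice.2.2⟩
  refine ⟨fun v hv => ?_, fun α hα u hu => (h α hα u hu).2.lt_card fun v hv hvj hsettled =>
    mem_inter.2 ⟨hv, mem_settledFinset.2 ⟨hvj, hsettled⟩⟩⟩
  rcases (mem_settledFinset.1 hv).2 with (hv | hv) | hv | hv
  · exact .inl hv.2.2
  · exact .inr (hmany hv.2)
  · exact .inl hv.1.2.1
  · exact .inr (hmany hv.2.1)

end Groups

section Parts

variable {V ι : Type*} [Fintype V] [Fintype ι]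

lemma card_filter_card_lt_mul_card_le {Y : ι → Finset V}
    (hY : Pairwise fun i j => Disjoint (Y i) (Y j)) (t : ℕ) :
    #{i | Fintype.card V < t * #(Y i)} ≤ t := by
  classical
  rcases isEmpty_or_nonempty V with hV | hV
  · simp [eq_empty_of_isEmpty]
  refine Nat.le_of_mul_le_mul_right ?_ (Fintype.card_pos (α := V))
  calc #{i | Fintype.card V < t * #(Y i)} * Fintype.card V
      ≤ ∑ i with Fintype.card V < t * #(Y i), t * #(Y i) :=
        card_nsmul_le_sum _ _ _ fun i hi => (mem_filter.1 hi).2.le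
    _ = t * #((univ.filter fun i => Fintype.card V < t * #(Y i)).biUnion Y) := by
        rw [card_biUnion fun i _ j _ h => hY h, mul_sum]
    _ ≤ t * Fintype.card V := by gcongr; exact card_le_univ _

lemma measureReal_uniformOn_univ_finset [MeasurableSpace ι] [DiscreteMeasurableSpace ι]
    (s : Finset ι) : (uniformOn (Set.univ : Set ι)).real s = #s / Fintype.card ι := by
  simp [measureReal_def, uniformOn_univ]

lemma measureReal_colour_snd_eq {ι κ : Type*} [Finite ι] [Nonempty ι] [Fintype κ]
    [MeasurableSpace ι] [DiscreteMeasurableSpace ι] [MeasurableSpace κ]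
    [DiscreteMeasurableSpace κ] (v : V) (a : κ) :
    (colouringLaw V (uniformOn (Set.univ : Set (ι × κ)))).real {c | (c v).2 = a}
      = 1 / Fintype.card κ := by
  have := Fintype.ofFinite ι
  have : Nonempty κ := ⟨a⟩
  have hcolour := measureReal_colour_mem (ν := uniformOn Set.univ) v
    (J := ((univ ×ˢ {a} : Finset (ι × κ)) : Set (ι × κ))) .of_discrete
  simp only [measureReal_uniformOn_univ_finset, mem_coe, mem_product, mem_univ, mem_singleton,
    true_and, card_product, card_univ, card_singleton, mul_one, Fintype.card_prod] at hcolour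
  rw [hcolour]
  push_cast
  exact div_mul_cancel_left₀ (by simp) _ |>.trans (one_div _).symm

open Classical in
/-- By Markov's inequality, the two conclusions fail with probability at most `1 / 2` and
`1 / 5`, respectively. -/
lemma exists_colouring [Nonempty V] [Nonempty ι] [MeasurableSpace ι] [DiscreteMeasurableSpace ι]
    {bad : ι → Set (V → ι × Fin 100)}
    (hbad : ∀ i, (colouringLaw V (uniformOn Set.univ)).real (bad i) ≤ 1 / 50) :
    ∃ c : V → ι × Fin 100, 50 * #{v | (c v).2 = 0} < Fintype.card V ∧
      10 * #{i | c ∈ bad i} < Fintype.card ι := by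
  set μ : Measure (V → ι × Fin 100) := colouringLaw V (uniformOn Set.univ)
  have hzero : ∀ v, μ.real {c | (c v).2 = 0} ≤ 1 / 100 := fun v => by
    rw [measureReal_colour_snd_eq, Fintype.card_fin, Nat.cast_ofNat]
  have hleft := measureReal_mul_card_le_card_filter_mem_le (μ := μ) univ_nonempty
    (fun v : V => .of_discrete) (a := 1 / 50) (by norm_num) fun v _ => hzero v
  have hbad' := measureReal_mul_card_le_card_filter_mem_le (μ := μ) univ_nonempty
    (A := bad) (fun i => .of_discrete) (a := 1 / 10) (by norm_num) fun i _ => hbad i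
  have hlt := (measureReal_union_le _ _).trans_lt <| (add_le_add hleft hbad').trans_lt
    (show (_ : ℝ) < μ.real Set.univ by rw [probReal_univ]; norm_num)
  obtain ⟨c, hc⟩ := (Set.ne_univ_iff_exists_notMem _).1 fun h => (h ▸ hlt).false
  simp only [Set.mem_union, Set.mem_ofPred_eq, not_or, not_le, card_univ] at hc
  refine ⟨c, ?_, ?_⟩
  · have := hc.1
    rify
    linarith
  · have := hc.2
    rify
    linarith

end Parts

section GroupParts

variable {V I ι : Type*} [Fintype V] [DecidableEq V] [Fintype I] [Fintype ι] {E : V → V → Prop}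
  [DecidableRel E] {G : GadgetSystem V I} {k t : ℕ} {m : ℝ} {i : ι}

lemma measureReal_not_wellColoured_le_of_card [MeasurableSpace ι] [DiscreteMeasurableSpace ι]
    [Nonempty ι] {𝒜 : Finset I} {W : Finset V} {r : ℕ} (hE : ∀ v, ¬ E v v)
    (hι : Fintype.card ι = 10 * t) (hk : 1 ≤ k) (hm : (10 ^ 8 * r * k * t : ℝ) ≤ m)
    (h𝒜 : #𝒜 = 10 * k) (hr : ∀ α, #(G.S α) ≤ r)
    (h : ∀ α ∈ 𝒜, ∀ u ∈ G.S α,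
      ManyIn (outN E u) m (NiceFor E G k t m 𝒜 (W \ G.X α)) ∧
        ManyIn (inN E u) m (NiceFor E G k t m 𝒜 (W \ G.X α))) :
    (colouringLaw V (uniformOn Set.univ)).real
      {c : V → ι × Fin 100 | ¬ WellColoured E G k t m 𝒜 W (i, 0) c} ≤ 1 / 50 := by
  obtain ⟨α, -⟩ : 𝒜.Nonempty := card_pos.1 (by omega)
  have hr' : (1 : ℝ) ≤ r := by
    exact_mod_cast (card_pos.2 ⟨_, G.sp_mem α⟩).trans_le (hr α)
  have hk' : (1 : ℝ) ≤ k := by exact_mod_cast hk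
  have ht : (0 : ℝ) < t := by
    have : 0 < Fintype.card ι := Fintype.card_pos
    exact_mod_cast (by omega : 0 < t)
  have hν : (uniformOn (Set.univ : Set (ι × Fin 100))).real {(i, 0)} = 1 / (1000 * t) := by
    rw [← coe_singleton, measureReal_uniformOn_univ_finset, card_singleton, Fintype.card_prod, hι,
      Fintype.card_fin]
    push_cast
    ring
  have hνm : 10 ^ 5 * r * k ≤ 1 / (1000 * t) * m := by
    rw [one_div_mul_eq_div, le_div_iff₀ (by positivity)]
    linarith
  refine (measureReal_not_wellColoured_le hE ?_ (fun α _ => hr α) h).trans ?_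
  · rw [hν]
    nlinarith
  · rw [hν, h𝒜, ← mul_assoc, ← mul_div_assoc, div_le_iff₀ (hνm.trans_lt' (by positivity))]
    push_cast
    linarith

variable [DecidableEq I]

variable (E G k t m) in
/-- The set built from the gadgets of the `i`-th group `B i` and the settled vertices of colour
`(i, 0)`. The other colours `(i, 1)`, …, `(i, 99)` keep most vertices outside all these sets. -/
noncomputable def groupPart (B : ι → Finset I) (c : V → ι × Fin 100) (i : ι) : Finset V :=
  (B i).biUnion G.U ∪ settledFinset E G k t m (B i) (Wof G (univ.biUnion B \ B i)) (i, 0) c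

variable {B : ι → Finset I} {c : V → ι × Fin 100}

lemma U_subset_groupPart {α : I} (hα : α ∈ B i) : G.U α ⊆ groupPart E G k t m B c i :=
  (subset_biUnion_of_mem G.U hα).trans subset_union_left

lemma disjoint_groupPart (h1 : CondG1 G) (hB : Pairwise fun i j => Disjoint (B i) (B j)) :
    Pairwise fun i j => Disjoint (groupPart E G k t m B c i) (groupPart E G k t m B c j) := by
  have hU : Pairwise fun i j => Disjoint ((B i).biUnion G.U) ((B j).biUnion G.U) :=
    fun i j hij => by
      simp only [disjoint_biUnion_left, disjoint_biUnion_right]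
      exact fun α hα β hβ => h1 β α fun h => disjoint_left.1 (hB hij) (h ▸ hβ) hα
  have hsettled : ∀ {i j}, i ≠ j → Disjoint ((B i).biUnion G.U)
      (settledFinset E G k t m (B j) (Wof G (univ.biUnion B \ B j)) (j, 0) c) := by
    refine fun {i j} hij => disjoint_left.2 fun x hx hxj => ?_
    obtain ⟨α, hα, hxα⟩ := mem_biUnion.1 hx
    exact (mem_sdiff.1 (mem_settledFinset.1 hxj).2.mem).2 <| mem_biUnion.2
      ⟨α, mem_sdiff.2 ⟨mem_biUnion.2 ⟨i, mem_univ i, hα⟩, disjoint_left.1 (hB hij) hα⟩, hxα⟩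
  intro i j hij
  simp only [groupPart, disjoint_union_left, disjoint_union_right]
  refine ⟨⟨hU hij, (hsettled hij.symm).symm⟩, hsettled hij, disjoint_left.2 fun x hx hx' => ?_⟩
  exact hij (congrArg Prod.fst
    ((mem_settledFinset.1 hx).1.symm.trans (mem_settledFinset.1 hx').1))

lemma notMem_groupPart {v : V} (hv : v ∈ Wof G (univ.biUnion B)) (hc : (c v).2 ≠ 0) :
    v ∉ groupPart E G k t m B c i := by
  simp only [groupPart, mem_union, not_or]
  refine ⟨fun h => ?_, fun h => hc (by rw [(mem_settledFinset.1 h).1])⟩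
  obtain ⟨α, hα, hvα⟩ := mem_biUnion.1 h
  exact (mem_sdiff.1 hv).2
    (mem_biUnion.2 ⟨α, mem_biUnion.2 ⟨i, mem_univ i, hα⟩, hvα⟩)

lemma card_le_card_groupPart (h1 : CondG1 G) : #(B i) ≤ #(groupPart E G k t m B c i) :=
  card_le_of_forall_subset h1 fun _ => U_subset_groupPart

lemma WellColoured.stronglyKConnectedOn_groupPart (h1 : CondG1 G) (h3 : CondG3 E G)
    (h4 : CondG4 E G) (hB : 3 * k < #(B i))
    (h : WellColoured E G k t m (B i) (Wof G (univ.biUnion B \ B i)) (i, 0) c) :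
    StronglyKConnectedOn E k (groupPart E G k t m B c i) :=
  stronglyKConnectedOn_biUnion_union h1 h3 h4 hB h.outAbsorbing h.outAbsorbing_reverse

lemma Nice1.le_card_inter_groupPart {W : Finset V} {v : V} (h1 : CondG1 G)
    (hB : 2 * k ≤ #(B i)) (hv : Nice1 E G k t (B i) W v) :
    k ≤ #(outN E v ∩ groupPart E G k t m B c i) ∧
      k ≤ #(inN E v ∩ groupPart E G k t m B c i) := by
  have hU : ∀ α ∈ B i, G.U α ⊆ groupPart E G k t m B c i := fun _ => U_subset_groupPart
  have hout := card_le_card_outN_inter_add_card_missOut (E := E) h1 hU v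
  have hin : #(B i) ≤ #(inN E v ∩ groupPart E G k t m B c i) + #(MissIn E G (B i) v) :=
    card_le_card_outN_inter_add_card_missOut (E := flip E) (G := G.reverse) h1 hU v
  obtain ⟨-, hmissOut, hmissIn⟩ := hv
  omega

lemma manyIn_sdiff_biUnion_groupPart (h1 : CondG1 G) (hB : 2 * k ≤ #(B i))
    (hc : 50 * #{v | (c v).2 = 0} < Fintype.card V)
    (h : ManyIn (Vgood E G k t ∩ Wof G (univ.biUnion B)) (Fintype.card V / 10)
      (NiceFor E G k t m (B i) (Wof G (univ.biUnion B)))) :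
    ManyIn ((univ \ univ.biUnion (groupPart E G k t m B c)) ∩ Vgood E G k t)
      (Fintype.card V / 100) fun v => k ≤ #(outN E v ∩ groupPart E G k t m B c i) ∧
        k ≤ #(inN E v ∩ groupPart E G k t m B c i) := by
  have hc' : (50 * #{v | (c v).2 = 0} : ℝ) < Fintype.card V := by exact_mod_cast hc
  refine (h.sdiff (Z := {v | (c v).2 = 0}) (m' := Fintype.card V / 100) (by linarith)).mono
    fun v hv hnice => ?_
  simp only [mem_sdiff, mem_inter, mem_filter, mem_univ, true_and] at hv
  obtain ⟨⟨hvgood, hvW⟩, hvc⟩ := hv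
  refine ⟨mem_inter.2 ⟨mem_sdiff.2 ⟨mem_univ v, fun hvpart => ?_⟩, hvgood⟩,
    (hnice.nice1_of_mem_Vgood hvgood).le_card_inter_groupPart h1 hB⟩
  obtain ⟨j, -, hj⟩ := mem_biUnion.1 hvpart
  exact notMem_groupPart hvW hvc hj

open Classical in
lemma exists_embedding_wellColoured (h1 : CondG1 G)
    (hB : Pairwise fun i j => Disjoint (B i) (B j)) (hι : Fintype.card ι = 10 * t)
    (hc : 10 * #{i | ¬ WellColoured E G k t m (B i) (Wof G (univ.biUnion B \ B i)) (i, 0) c}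
      < Fintype.card ι) :
    ∃ f : Fin t ↪ ι, ∀ a,
      WellColoured E G k t m (B (f a)) (Wof G (univ.biUnion B \ B (f a))) (f a, 0) c ∧
        t * #(groupPart E G k t m B c (f a)) ≤ Fintype.card V := by
  set bad : Finset ι :=
    {i | ¬ WellColoured E G k t m (B i) (Wof G (univ.biUnion B \ B i)) (i, 0) c}
  set large : Finset ι := {i | Fintype.card V < t * #(groupPart E G k t m B c i)}
  have hlarge : #large ≤ t := card_filter_card_lt_mul_card_le (disjoint_groupPart h1 hB) t
  have hgood : Fintype.card (Fin t) ≤ #(bad ∪ large)ᶜ := by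
    have := card_union_le bad large
    rw [card_compl, Fintype.card_fin]
    omega
  obtain ⟨f, hf⟩ := Function.Embedding.exists_of_card_le_finset hgood
  refine ⟨f, fun a => ?_⟩
  simpa [bad, large] using hf (Set.mem_range_self a)

theorem statement17_general (hE : ∀ v, ¬ E v v) (h1 : CondG1 G) (h3 : CondG3 E G)
    (h4 : CondG4 E G) {r : ℕ} (hr : ∀ α, #(G.S α) ≤ r) (hk : 1 ≤ k) (ht : 0 < t)
    (hm : (10 ^ 8 * r * k * t : ℝ) ≤ m) (hι : Fintype.card ι = 10 * t)
    (hB : Pairwise fun i j => Disjoint (B i) (B j)) (hBcard : ∀ i, #(B i) = 10 * k)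
    (hS : ∀ i, ∀ α ∈ B i, ∀ u ∈ G.S α,
      ManyIn (outN E u) m (NiceFor E G k t m (B i) (Wof G (univ.biUnion B \ B i) \ G.X α)) ∧
        ManyIn (inN E u) m (NiceFor E G k t m (B i) (Wof G (univ.biUnion B \ B i) \ G.X α)))
    (hgood : ∀ i, ManyIn (Vgood E G k t ∩ Wof G (univ.biUnion B)) (Fintype.card V / 10)
      (NiceFor E G k t m (B i) (Wof G (univ.biUnion B)))) :
    ∃ P : Fin t → Finset V,
      (∀ i j, i ≠ j → Disjoint (P i) (P j)) ∧
      (∀ i, 2 * k ≤ #(P i) ∧ (#(P i) : ℝ) ≤ Fintype.card V / t) ∧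
      (∀ i, StronglyKConnectedOn E k (P i)) ∧
      (∀ i, ∃ B' ⊆ univ.biUnion B, 10 * k ≤ #B' ∧ ∀ α ∈ B', G.U α ⊆ P i) ∧
      ∀ i, ManyIn ((univ \ univ.biUnion P) ∩ Vgood E G k t) (Fintype.card V / 100)
        fun u => k ≤ #(outN E u ∩ P i) ∧ k ≤ #(inN E u ∩ P i) := by
  classical
  let _ : MeasurableSpace ι := ⊤
  have : Nonempty ι := Fintype.card_pos_iff.1 (by omega)
  obtain ⟨α, -⟩ : (B (Classical.arbitrary ι)).Nonempty :=
    card_pos.1 (by rw [hBcard]; omega)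
  have : Nonempty V := ⟨G.sp α⟩
  obtain ⟨c, hc, hbad⟩ := exists_colouring fun i =>
    measureReal_not_wellColoured_le_of_card (i := i) hE hι hk hm (hBcard i) hr (hS i)
  simp only [Set.mem_ofPred_eq] at hbad
  obtain ⟨f, hf⟩ := exists_embedding_wellColoured h1 hB hι hbad
  refine ⟨fun a => groupPart E G k t m B c (f a),
    fun _ _ hab => disjoint_groupPart h1 hB (f.injective.ne hab), fun a => ⟨?_, ?_⟩,
    fun a => (hf a).1.stronglyKConnectedOn_groupPart h1 h3 h4 (by rw [hBcard]; omega),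
    fun a => ⟨B (f a), subset_biUnion_of_mem B (mem_univ _), (hBcard _).ge,
      fun _ => U_subset_groupPart⟩, fun a => ?_⟩
  · exact (by rw [hBcard]; omega : 2 * k ≤ #(B (f a))).trans (card_le_card_groupPart h1)
  · rw [le_div_iff₀' (by exact_mod_cast ht)]
    exact_mod_cast (hf a).2
  · refine (manyIn_sdiff_biUnion_groupPart h1 (by rw [hBcard]; omega) hc (hgood (f a))).mono
      fun v hv hdeg => ⟨inter_subset_inter_right (sdiff_subset_sdiff le_rfl ?_) hv, hdeg⟩
    exact biUnion_subset.2 fun b _ => subset_biUnion_of_mem (groupPart E G k t m B c) (mem_univ _)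

end GroupParts

/-- Proposition 4.14: many connected sets. -/
theorem statement17 :
    ∃ C : ℕ, ∀ (τ₁ τ₂ τ₃ k t : ℕ),
      C ≤ τ₃ → C * τ₃ ≤ τ₂ → C * τ₂ ≤ τ₁ → C * τ₁ ≤ k → 2 ≤ t →
      ∀ (V : Type) [Fintype V] [DecidableEq V] (E : V → V → Prop) [DecidableRel E],
        IsTournament E → StronglyKConnected E (τ₁ * k * t) →
        ∀ G : GadgetSystem V (Fin (sigma1 * k * t)),
          GadgetHyp E G k t → GadgetHyp2 E G k t τ₁ →
          ∀ (𝒜₃ : Finset (Fin (sigma1 * k * t)))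
            (B : Fin (sigma3 * t) → Finset (Fin (sigma1 * k * t))),
            (∀ i j : Fin (sigma3 * t), i ≠ j → Disjoint (B i) (B j)) →
            Finset.univ.biUnion B = 𝒜₃ →
            (∀ i, (B i).card = 10 * k) →
            (∀ i, ∀ α ∈ B i, ∀ u ∈ G.S α,
              ManyIn (outN E u) ((τ₃ * k * t : ℕ) : ℝ)
                (Eligible E G k t τ₃ (B i) (Wof G (𝒜₃ \ B i) \ G.X α)) ∧
              ManyIn (inN E u) ((τ₃ * k * t : ℕ) : ℝ)
                (Eligible E G k t τ₃ (B i) (Wof G (𝒜₃ \ B i) \ G.X α))) →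
            (∀ i, ManyIn (Vgood E G k t ∩ Wof G 𝒜₃) ((Fintype.card V : ℝ) / 10)
              (Eligible E G k t τ₃ (B i) (Wof G 𝒜₃))) →
            ∃ P : Fin t → Finset V,
              (∀ i j : Fin t, i ≠ j → Disjoint (P i) (P j)) ∧
              (∀ i, 2 * k ≤ (P i).card ∧
                ((P i).card : ℝ) ≤ (Fintype.card V : ℝ) / t) ∧
              (∀ i, StronglyKConnectedOn E k (P i)) ∧
              (∀ i, ∃ B' : Finset (Fin (sigma1 * k * t)), B' ⊆ 𝒜₃ ∧
                10 * k ≤ B'.card ∧ ∀ α ∈ B', G.U α ⊆ P i) ∧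
              (∀ i, ManyIn
                ((Finset.univ \ Finset.univ.biUnion P) ∩ Vgood E G k t)
                ((Fintype.card V : ℝ) / 100)
                (fun u => k ≤ (outN E u ∩ P i).card ∧ k ≤ (inN E u ∩ P i).card)) := by
  refine ⟨10 ^ 12, ?_⟩
  rintro τ₁ τ₂ τ₃ k t hτ₃ hτ₂ hτ₁ hkτ ht V _ _ E _ ⟨hE, -⟩ - G ⟨h1, h2, h3, h4, -⟩ - 𝒜₃ B hB rfl
    hBcard hS hgood
  have hm : 10 ^ 8 * rho * k * t ≤ τ₃ * k * t := by
    gcongr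
    simpa [rho] using hτ₃
  exact statement17_general hE h1 h3 h4 (fun α => (h2 α).1) (by omega) (by omega)
    (by exact_mod_cast hm) (Fintype.card_fin _) (fun i j => hB i j) hBcard hS hgood

end TournamentPartition
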